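/- arXiv:2305.02183 — 2 statements merged into one kernel-verified Lean document; each statement's English description precedes it below -/
import Mathlib

section
/- Let A be a finite-dimensional real affine space over V, let g ≠ 0 be a symmetric bilinear form on V, let CM_g be the Cayley–Menger form of g, and let v_m be the coefficient functional on W_g. Then a linear functional φ on W_g is of the form φ = ev_P for some point P ∈ A if and only if CM_g(φ, φ) = 0 and CM_g(φ, v_m) = 1. -/
/-!
The argument fixes a base point `O` and uses that `W_g` is spanned by the affine functions and
`δ₀(P) = g(P - O, P - O) / 2`, whose Hessian is `g`; a quadratic function with zero Hessian is
affine (`exists_affine_of_hessian_zero`). Dually, every functional on `W_g` has the form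
`c • ev_O + (ev_{x + O} - ev_O) + t • v_m` with `c = φ(1)` (`functional_decomp`).

The coefficient functional `v_m` kills affine functions, so it annihilates `1` and is represented
by `0 ∈ V`. Hence condition (ii) gives `CM(v_m, v_m) = 0` and `CM(ev_P - ev_Q, v_m) = 0`.
Moreover `CM(ev_P, ev_Q) = g(Q - P, Q - P) / 2`, and pairing `ev_m` with the identity
`2 ev_P + 2 ev_Q - 4 ev_m = (g(Q - P, Q - P) / 2) • v_m`, where `m` is the midpoint of `P, Q` and
`g(Q - P, Q - P) ≠ 0`, gives `CM(ev_P, v_m) = 1` for every `P`.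

Consequently `CM(φ, v_m) = c`, and when `c = 1` the decomposition reads `φ = ev_P + t • v_m` with
`P = x + O`, so `CM(φ, φ) = 2 t`. Both conditions together say exactly `c = 1` and `t = 0`.
-/

/-- A function `δ : A → ℝ` on a real affine space is *quadratic* if for all points
`P, Q` and all `α, β ∈ ℝ` with `α + β = 1`,
`δ(α·P + β·Q) = α(α−β)·δ(P) + β(β−α)·δ(Q) + 4αβ·δ(midpoint(P,Q))`. -/
def IsQuadraticFn {V A : Type*} [AddCommGroup V] [Module ℝ V] [AddTorsor V A]
    (δ : A → ℝ) : Prop :=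
  ∀ (P Q : A) (α β : ℝ), α + β = 1 →
    δ (AffineMap.lineMap P Q β) =
      α * (α - β) * δ P + β * (β - α) * δ Q + 4 * α * β * δ (midpoint ℝ P Q)

/-- `B` is the Hessian of `δ`. -/
def IsHessianOf {V A : Type*} [AddCommGroup V] [Module ℝ V] [AddTorsor V A]
    (δ : A → ℝ) (B : LinearMap.BilinForm ℝ V) : Prop :=
  ∀ P Q : A, 2 * δ P + 2 * δ Q - 4 * δ (midpoint ℝ P Q) =
    (1/2 : ℝ) * B (Q -ᵥ P) (Q -ᵥ P)

/-- `W_g`: the space of quadratic functions `A → ℝ` whose Hessian is a scalar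
multiple of `g`, as a submodule of `A → ℝ`. -/
def Wg {V : Type*} [AddCommGroup V] [Module ℝ V]
    (g : LinearMap.BilinForm ℝ V) (A : Type*) [AddTorsor V A] :
    Submodule ℝ (A → ℝ) where
  carrier := {δ : A → ℝ | IsQuadraticFn δ ∧ ∃ c : ℝ, IsHessianOf δ (c • g)}
  add_mem' := by
    rintro a b ⟨ha1, ca, ha2⟩ ⟨hb1, cb, hb2⟩
    refine ⟨fun P Q α β h => ?_, ca + cb, fun P Q => ?_⟩
    · have h1 := ha1 P Q α β h
      have h2 := hb1 P Q α β h
      simp only [Pi.add_apply]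
      linear_combination h1 + h2
    · have h1 := ha2 P Q
      have h2 := hb2 P Q
      simp only [Pi.add_apply, LinearMap.add_apply, LinearMap.smul_apply,
        smul_eq_mul] at h1 h2 ⊢
      linear_combination h1 + h2
  zero_mem' := by
    refine ⟨fun P Q α β h => ?_, 0, fun P Q => ?_⟩
    · simp only [Pi.zero_apply]; ring
    · simp only [Pi.zero_apply, zero_smul, LinearMap.zero_apply]; ring
  smul_mem' := by
    rintro c a ⟨ha1, ca, ha2⟩
    refine ⟨fun P Q α β h => ?_, c * ca, fun P Q => ?_⟩
    · have h1 := ha1 P Q α β h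
      simp only [Pi.smul_apply, smul_eq_mul]
      linear_combination c * h1
    · have h1 := ha2 P Q
      simp only [Pi.smul_apply, smul_eq_mul, LinearMap.smul_apply] at h1 ⊢
      linear_combination c * h1

/-- The evaluation functional `ev_P : W_g → ℝ` at a point `P`. -/
def evW {V : Type*} [AddCommGroup V] [Module ℝ V]
    (g : LinearMap.BilinForm ℝ V) {A : Type*} [AddTorsor V A] (P : A) :
    Module.Dual ℝ (Wg g A) where
  toFun δ := (δ : A → ℝ) P
  map_add' x y := rfl
  map_smul' c x := rfl

/-- `φ` annihilates the constant function `1 ∈ W_g`. -/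
def AnnihilatesOne {V : Type*} [AddCommGroup V] [Module ℝ V]
    (g : LinearMap.BilinForm ℝ V) {A : Type*} [AddTorsor V A]
    (φ : Module.Dual ℝ (Wg g A)) : Prop :=
  ∀ h1 : (fun _ : A => (1 : ℝ)) ∈ Wg g A, φ ⟨fun _ => (1 : ℝ), h1⟩ = 0

/-- `x ∈ V` represents the functional `φ` on `W_g`: for every affine function
`f : A → ℝ` (an element of `W_g`), `φ(f) = (linear part of f)(x)`. -/
def Represents {V : Type*} [AddCommGroup V] [Module ℝ V]
    (g : LinearMap.BilinForm ℝ V) {A : Type*} [AddTorsor V A]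
    (φ : Module.Dual ℝ (Wg g A)) (x : V) : Prop :=
  ∀ (f : A →ᵃ[ℝ] ℝ) (hf : ⇑f ∈ Wg g A), φ ⟨⇑f, hf⟩ = f.linear x

/-- `C` is a Cayley–Menger form for `g`: a symmetric bilinear form on the dual of
`W_g` such that (i) every evaluation functional `ev_P` is isotropic, and (ii) on
functionals annihilating the constant `1`, `C(φ, ψ) = −g(x_φ, x_ψ)`. -/
def IsCayleyMenger {V : Type*} [AddCommGroup V] [Module ℝ V]
    (g : LinearMap.BilinForm ℝ V) (A : Type*) [AddTorsor V A]
    (C : LinearMap.BilinForm ℝ (Module.Dual ℝ (Wg g A))) : Prop :=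
  (∀ φ ψ, C φ ψ = C ψ φ) ∧
  (∀ P : A, C (evW g P) (evW g P) = 0) ∧
  (∀ (φ ψ : Module.Dual ℝ (Wg g A)) (x y : V),
    AnnihilatesOne g φ → AnnihilatesOne g ψ →
    Represents g φ x → Represents g ψ y → C φ ψ = - g x y)

section CayleyMengerAux

variable {V A : Type*} [AddCommGroup V] [Module ℝ V] [AddTorsor V A]

lemma lineMap_vsub_base (O P Q : A) (t : ℝ) :
    AffineMap.lineMap P Q t -ᵥ O = (1 - t) • (P -ᵥ O) + t • (Q -ᵥ O) := by
  rw [AffineMap.lineMap_apply, vadd_vsub_assoc, ← vsub_sub_vsub_cancel_right Q P O]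
  module

lemma affine_lineMap (f : A →ᵃ[ℝ] ℝ) (P Q : A) (t : ℝ) :
    f (AffineMap.lineMap P Q t) = (1 - t) * f P + t * f Q := by
  rw [AffineMap.apply_lineMap, AffineMap.lineMap_apply_module]
  simp

lemma affine_hessian_zero (f : A →ᵃ[ℝ] ℝ) (g : LinearMap.BilinForm ℝ V) :
    IsHessianOf (f : A → ℝ) ((0 : ℝ) • g) := by
  intro P Q
  rw [midpoint, affine_lineMap]
  simp
  ring

lemma affine_mem_Wg (g : LinearMap.BilinForm ℝ V) (f : A →ᵃ[ℝ] ℝ) : ⇑f ∈ Wg g A := by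
  refine ⟨fun P Q α β h => ?_, 0, affine_hessian_zero f g⟩
  obtain rfl : α = 1 - β := by linarith
  rw [midpoint, affine_lineMap, affine_lineMap, invOf_eq_inv]
  ring

lemma one_mem_Wg (g : LinearMap.BilinForm ℝ V) : (fun _ : A => (1 : ℝ)) ∈ Wg g A :=
  affine_mem_Wg g (AffineMap.const ℝ A (1 : ℝ))

/-- The function `P ↦ g(P - O, P - O) / 2`, the homogeneous element of `W_g` with Hessian `g`. -/
noncomputable def baseQuad (g : LinearMap.BilinForm ℝ V) (O : A) : A → ℝ :=
  fun P => (1 / 2 : ℝ) * g (P -ᵥ O) (P -ᵥ O)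

lemma baseQuad_hessian (g : LinearMap.BilinForm ℝ V) (O : A) :
    IsHessianOf (baseQuad g O) ((1 : ℝ) • g) := by
  intro P Q
  simp only [baseQuad, midpoint, lineMap_vsub_base, invOf_eq_inv]
  rw [← vsub_sub_vsub_cancel_right Q P O]
  simp only [map_add, map_sub, map_smul, LinearMap.add_apply, LinearMap.sub_apply,
    LinearMap.smul_apply, smul_eq_mul]
  ring

lemma baseQuad_mem (g : LinearMap.BilinForm ℝ V) (O : A) : baseQuad g O ∈ Wg g A := by
  refine ⟨fun P Q α β h => ?_, 1, baseQuad_hessian g O⟩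
  obtain rfl : α = 1 - β := by linarith
  simp only [baseQuad, midpoint, lineMap_vsub_base, invOf_eq_inv]
  simp only [map_add, map_smul, LinearMap.add_apply, LinearMap.smul_apply, smul_eq_mul]
  ring

lemma lineMap_of_hessian_zero {δ : A → ℝ} (hq : IsQuadraticFn (V := V) δ)
    (h0 : IsHessianOf δ (0 : LinearMap.BilinForm ℝ V)) (P Q : A) (t : ℝ) :
    δ (AffineMap.lineMap P Q t) = (1 - t) * δ P + t * δ Q := by
  have h1 := hq P Q (1 - t) t (by ring)
  have h2 := h0 P Q
  simp only [LinearMap.zero_apply, mul_zero] at h2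
  linear_combination h1 - (1 - t) * t * h2

lemma exists_affine_of_hessian_zero {δ : A → ℝ} (hq : IsQuadraticFn (V := V) δ)
    (h0 : IsHessianOf δ (0 : LinearMap.BilinForm ℝ V)) : ∃ f : A →ᵃ[ℝ] ℝ, ⇑f = δ := by
  have key := lineMap_of_hessian_zero hq h0
  obtain ⟨O⟩ := (inferInstance : Nonempty A)
  have hsmul : ∀ (c : ℝ) (v : V), δ (c • v +ᵥ O) - δ O = c * (δ (v +ᵥ O) - δ O) := by
    intro c v
    have := key O (v +ᵥ O) c
    rw [AffineMap.lineMap_apply, vadd_vsub] at this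
    linear_combination this
  have hadd : ∀ v w : V, δ ((v + w) +ᵥ O) - δ O =
      (δ (v +ᵥ O) - δ O) + (δ (w +ᵥ O) - δ O) := by
    intro v w
    -- `v + w + O` is the midpoint of `2v + O` and `2w + O`.
    have h1 := key ((2 : ℝ) • v +ᵥ O) ((2 : ℝ) • w +ᵥ O) (1 / 2)
    have h2 : AffineMap.lineMap ((2 : ℝ) • v +ᵥ O) ((2 : ℝ) • w +ᵥ O) (1 / 2 : ℝ)
        = (v + w) +ᵥ O := by
      apply vsub_left_injective O
      change _ -ᵥ O = _ -ᵥ O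
      rw [lineMap_vsub_base]
      simp only [vadd_vsub]
      module
    rw [h2] at h1
    have h3 := hsmul 2 v
    have h4 := hsmul 2 w
    linear_combination h1 + h3 / 2 + h4 / 2
  let L : V →ₗ[ℝ] ℝ :=
    { toFun := fun v => δ (v +ᵥ O) - δ O
      map_add' := hadd
      map_smul' := fun c v => by simpa using hsmul c v }
  refine ⟨⟨δ, L, fun P v => ?_⟩, rfl⟩
  have h := hadd v (P -ᵥ O)
  rw [add_vadd, vsub_vadd] at h
  change δ (v +ᵥ P) = (δ (v +ᵥ O) - δ O) + δ P
  linear_combination h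

/-- Two functionals on `W_g` agreeing on affine functions and on `baseQuad g O` are equal. -/
lemma functional_ext (g : LinearMap.BilinForm ℝ V) (O : A) (φ ψ : Module.Dual ℝ (Wg g A))
    (haff : ∀ f : A →ᵃ[ℝ] ℝ, φ ⟨f, affine_mem_Wg g f⟩ = ψ ⟨f, affine_mem_Wg g f⟩)
    (hquad : φ ⟨_, baseQuad_mem g O⟩ = ψ ⟨_, baseQuad_mem g O⟩) : φ = ψ := by
  ext δ
  obtain ⟨c, hc⟩ := δ.2.2
  let q : Wg g A := ⟨_, baseQuad_mem g O⟩
  have h0 : IsHessianOf ((δ - c • q : Wg g A) : A → ℝ) (0 : LinearMap.BilinForm ℝ V) := by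
    intro P Q
    have h1 := hc P Q
    have h2 := baseQuad_hessian g O P Q
    simp only [Submodule.coe_sub, Submodule.coe_smul, Pi.sub_apply, Pi.smul_apply, smul_eq_mul,
      LinearMap.smul_apply, LinearMap.zero_apply, q] at h1 h2 ⊢
    linear_combination h1 - c * h2
  obtain ⟨f, hf⟩ := exists_affine_of_hessian_zero (δ - c • q).2.1 h0
  have hδ : δ = ⟨f, affine_mem_Wg g f⟩ + c • q := by
    have : (⟨f, affine_mem_Wg g f⟩ : Wg g A) = δ - c • q := Subtype.ext hf
    rw [this, sub_add_cancel]
  rw [hδ, map_add, map_add, map_smul, map_smul, haff f, hquad]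

/-- Every functional on `W_g` is a combination of evaluations and the coefficient functional. -/
lemma functional_decomp [FiniteDimensional ℝ V] (g : LinearMap.BilinForm ℝ V) (O : A)
    (vm : Module.Dual ℝ (Wg g A))
    (hvm : ∀ (δ : Wg g A) (lam : ℝ), IsHessianOf (δ : A → ℝ) (lam • g) → vm δ = lam)
    (φ : Module.Dual ℝ (Wg g A)) :
    ∃ (x : V) (t : ℝ), φ = φ ⟨_, one_mem_Wg g⟩ • evW g O
      + (evW g (x +ᵥ O) - evW g O) + t • vm := by
  -- The affine function `P ↦ ℓ(P - O)` attached to a covector `ℓ`.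
  let a : Module.Dual ℝ V → (A →ᵃ[ℝ] ℝ) := fun l =>
    ⟨fun P => l (P -ᵥ O), l, fun P v => by rw [vadd_vsub_assoc, map_add, vadd_eq_add]⟩
  let Φ : Module.Dual ℝ (Module.Dual ℝ V) :=
    { toFun := fun l => φ ⟨a l, affine_mem_Wg g (a l)⟩
      map_add' := fun l l' => by rw [← map_add]; rfl
      map_smul' := fun c l => by rw [RingHom.id_apply, ← map_smul]; rfl }
  obtain ⟨x, hx⟩ := (Module.evalEquiv ℝ V).surjective Φ
  have hx' : ∀ l, l x = φ ⟨a l, affine_mem_Wg g (a l)⟩ := fun l =>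
    LinearMap.congr_fun hx l
  let c := φ ⟨_, one_mem_Wg g⟩
  let q : Wg g A := ⟨_, baseQuad_mem g O⟩
  refine ⟨x, φ q - (c • evW g O + (evW g (x +ᵥ O) - evW g O)) q, ?_⟩
  refine functional_ext g O _ _ (fun f => ?_) ?_
  · have hv : vm ⟨f, affine_mem_Wg g f⟩ = 0 := hvm _ 0 (affine_hessian_zero f g)
    have hf : (⟨f, affine_mem_Wg g f⟩ : Wg g A) =
        ⟨a f.linear, affine_mem_Wg g (a f.linear)⟩ + f O • ⟨_, one_mem_Wg g⟩ := by
      ext P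
      change f P = f.linear (P -ᵥ O) + f O * 1
      rw [AffineMap.linearMap_vsub, vsub_eq_sub]
      ring
    have h1 : φ ⟨f, affine_mem_Wg g f⟩ = f.linear x + f O * c := by
      rw [hf, map_add, map_smul, ← hx', smul_eq_mul]
    rw [h1]
    change _ = c * f O + (f (x +ᵥ O) - f O) + _ * vm ⟨f, affine_mem_Wg g f⟩
    rw [hv, AffineMap.map_vadd, vadd_eq_add]
    ring
  · have hv : vm q = 1 := hvm q 1 (baseQuad_hessian g O)
    change φ q = (c • evW g O + (evW g (x +ᵥ O) - evW g O)) q + _ * vm q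
    rw [hv]
    ring

lemma ev_sub_annihilates (g : LinearMap.BilinForm ℝ V) (P Q : A) :
    AnnihilatesOne g (evW g Q - evW g P) := fun _ => sub_self (1 : ℝ)

lemma ev_sub_represents (g : LinearMap.BilinForm ℝ V) (P Q : A) :
    Represents g (evW g Q - evW g P) (Q -ᵥ P) := fun f _ => by
  rw [AffineMap.linearMap_vsub]; rfl

lemma cm_ev_ev {g : LinearMap.BilinForm ℝ V}
    {C : LinearMap.BilinForm ℝ (Module.Dual ℝ (Wg g A))} (hC : IsCayleyMenger g A C) (P Q : A) :
    C (evW g P) (evW g Q) = (1 / 2 : ℝ) * g (Q -ᵥ P) (Q -ᵥ P) := by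
  obtain ⟨hs, hi, hr⟩ := hC
  have h := hr _ _ _ _ (ev_sub_annihilates g P Q) (ev_sub_annihilates g P Q)
    (ev_sub_represents g P Q) (ev_sub_represents g P Q)
  simp only [map_sub, LinearMap.sub_apply, hi, hs (evW g Q) (evW g P)] at h
  linarith

lemma exists_apply_self_ne_zero {g : LinearMap.BilinForm ℝ V} (hgs : ∀ x y, g x y = g y x)
    (hg0 : g ≠ 0) : ∃ d, g d d ≠ 0 := by
  by_contra! h
  refine hg0 (LinearMap.ext₂ fun x y => ?_)
  have hxy := h (x + y)
  simp only [map_add, LinearMap.add_apply, h, hgs y x] at hxy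
  simpa using hxy

end CayleyMengerAux

/-- Let `g ≠ 0` be a symmetric bilinear form, `C = CM_g` its
Cayley–Menger form and `v_m` the coefficient functional on `W_g` (sending `δ` to the
unique `λ` with `Hessian(δ) = λ·g`).  A functional `φ` on `W_g` equals `ev_P` for
some point `P ∈ A` iff `C(φ, φ) = 0` and `C(φ, v_m) = 1`. -/
theorem stmt17 {V A : Type*} [AddCommGroup V] [Module ℝ V] [AddTorsor V A]
    [FiniteDimensional ℝ V]
    (g : LinearMap.BilinForm ℝ V) (hgs : ∀ x y, g x y = g y x) (hg0 : g ≠ 0)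
    (C : LinearMap.BilinForm ℝ (Module.Dual ℝ (Wg g A)))
    (hC : IsCayleyMenger g A C)
    (vm : Module.Dual ℝ (Wg g A))
    (hvm : ∀ (δ : Wg g A) (lam : ℝ), IsHessianOf (δ : A → ℝ) (lam • g) →
      vm δ = lam) :
    ∀ φ : Module.Dual ℝ (Wg g A),
      (∃ P : A, φ = evW g P) ↔ (C φ φ = 0 ∧ C φ vm = 1) := by
  obtain ⟨O⟩ := (inferInstance : Nonempty A)
  obtain ⟨hs, hi, hr⟩ := id hC
  have hvaff : ∀ (f : A →ᵃ[ℝ] ℝ) (hf : ⇑f ∈ Wg g A), vm ⟨f, hf⟩ = 0 := fun f hf =>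
    hvm ⟨f, hf⟩ 0 (affine_hessian_zero f g)
  have hvA : AnnihilatesOne g vm := fun h1 => hvaff (AffineMap.const ℝ A (1 : ℝ)) h1
  have hvR : Represents g vm 0 := fun f hf => by rw [hvaff f hf, map_zero]
  have hvv : C vm vm = 0 := by rw [hr vm vm 0 0 hvA hvA hvR hvR]; simp
  have hconst : ∀ P Q : A, C (evW g Q) vm = C (evW g P) vm := fun P Q => by
    have h := hr _ vm _ 0 (ev_sub_annihilates g P Q) hvA (ev_sub_represents g P Q) hvR
    simp only [map_sub, LinearMap.sub_apply, map_zero, neg_zero] at h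
    linarith
  have hev : ∀ P : A, C (evW g P) vm = 1 := by
    obtain ⟨d, hd⟩ := exists_apply_self_ne_zero hgs hg0
    have hid : (2 : ℝ) • evW g O + (2 : ℝ) • evW g (d +ᵥ O)
        - (4 : ℝ) • evW g (midpoint ℝ O (d +ᵥ O)) = ((1 / 2 : ℝ) * g d d) • vm := by
      ext δ
      obtain ⟨c, hc⟩ := δ.2.2
      have h1 := hc O (d +ᵥ O)
      rw [vadd_vsub, LinearMap.smul_apply, LinearMap.smul_apply, smul_eq_mul] at h1
      change 2 * (δ : A → ℝ) O + 2 * (δ : A → ℝ) (d +ᵥ O)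
        - 4 * (δ : A → ℝ) (midpoint ℝ O (d +ᵥ O)) = (1 / 2 * g d d) * vm δ
      rw [h1, hvm δ c hc]
      ring
    have h2 := congrArg (C (evW g (midpoint ℝ O (d +ᵥ O)))) hid
    have e1 : O -ᵥ midpoint ℝ O (d +ᵥ O) = (-(1 / 2) : ℝ) • d := by
      rw [left_vsub_midpoint, ← neg_vsub_eq_vsub_rev, vadd_vsub, invOf_eq_inv]
      module
    have e2 : (d +ᵥ O) -ᵥ midpoint ℝ O (d +ᵥ O) = (1 / 2 : ℝ) • d := by
      rw [right_vsub_midpoint, vadd_vsub, invOf_eq_inv]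
      module
    simp only [map_sub, map_add, map_smul, hi, cm_ev_ev hC, e1, e2, LinearMap.smul_apply,
      smul_eq_mul] at h2
    intro P
    rw [hconst (midpoint ℝ O (d +ᵥ O)) P]
    apply mul_left_cancel₀ hd
    linarith
  intro φ
  constructor
  · rintro ⟨P, rfl⟩
    exact ⟨hi P, hev P⟩
  · rintro ⟨h0, h1⟩
    obtain ⟨x, t, hφ⟩ := functional_decomp g O vm hvm φ
    have hc : φ ⟨_, one_mem_Wg g⟩ = 1 := by
      rw [hφ] at h1
      simp only [map_sub, map_add, map_smul, LinearMap.add_apply, LinearMap.sub_apply,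
        LinearMap.smul_apply, hev, hvv, smul_eq_mul] at h1
      linarith
    have hφ' : φ = evW g (x +ᵥ O) + t • vm := by
      rw [hφ, hc]
      module
    have ht : t = 0 := by
      rw [hφ'] at h0
      simp only [map_add, map_smul, LinearMap.add_apply, LinearMap.smul_apply, hi, hev, hvv,
        hs vm, smul_eq_mul] at h0
      linarith
    exact ⟨x +ᵥ O, by rw [hφ', ht, zero_smul, add_zero]⟩
end

section
/- Let A and B be finite-dimensional real affine spaces over V_A and V_B respectively, let φ : B → A be an affine map with linear part dφ : V_B → V_A, let g be a symmetric bilinear form on V_A, and let ḡ be the pullback bilinear form on V_B defined by ḡ(x, y) = g(dφ(x), dφ(y)); assume ḡ ≠ 0. Then: (a) for every δ in W_g (formed on A with respect to g), the composition δ∘φ belongs to W_{ḡ} (formed on B with respect to ḡ), so precomposition with φ defines a linear map T : W_g → W_{ḡ}; and (b) for all linear functionals v̄, w̄ on W_{ḡ}: CM_{ḡ}(v̄, w̄) = CM_g(v̄∘T, w̄∘T). -/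
/-- The restriction to a line of an element of `W_g`: it deviates from affine interpolation by a
multiple of `g(Q - P, Q - P)`. -/
lemma apply_lineMap_of_hessian {V A : Type*} [AddCommGroup V] [Module ℝ V] [AddTorsor V A]
    {g : LinearMap.BilinForm ℝ V} {δ : A → ℝ} (h : IsQuadraticFn δ) {c : ℝ}
    (hc : IsHessianOf δ (c • g)) (P Q : A) (t : ℝ) :
    δ (AffineMap.lineMap P Q t) =
      (1 - t) * δ P + t * δ Q - (1 - t) * t * (c / 2) * g (Q -ᵥ P) (Q -ᵥ P) := by
  have h1 := h P Q (1 - t) t (by ring)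
  have h2 := hc P Q
  simp only [LinearMap.smul_apply, smul_eq_mul] at h2
  linear_combination h1 - (1 - t) * t * h2

lemma finiteDimensional_Wg {V A : Type*} [AddCommGroup V] [Module ℝ V] [AddTorsor V A]
    [FiniteDimensional ℝ V] (g : LinearMap.BilinForm ℝ V) :
    FiniteDimensional ℝ (Wg g A) := by
  obtain ⟨O⟩ : Nonempty A := inferInstance
  -- `Φ (a, b, l)` is the function `P ↦ a g(P - O, P - O) + b + l(P - O)`.
  let Φ : (ℝ × ℝ × Module.Dual ℝ V) →ₗ[ℝ] (A → ℝ) :=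
    { toFun := fun p P => p.1 * g (P -ᵥ O) (P -ᵥ O) + p.2.1 + p.2.2 (P -ᵥ O)
      map_add' := by
        intro p q
        ext P
        simp only [Prod.fst_add, Prod.snd_add, LinearMap.add_apply, Pi.add_apply]
        ring
      map_smul' := by
        intro r p
        ext P
        simp only [Prod.smul_fst, Prod.smul_snd, LinearMap.smul_apply, Pi.smul_apply,
          smul_eq_mul, RingHom.id_apply]
        ring }
  have hle : Wg g A ≤ LinearMap.range Φ := by
    rintro δ ⟨hδ, c, hc⟩
    have hl := apply_lineMap_of_hessian hδ hc
    let f : V → ℝ := fun x => δ (x +ᵥ O) - δ O - c / 2 * g x x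
    have hsmul : ∀ (t : ℝ) (x : V), f (t • x) = t * f x := by
      intro t x
      have h := hl O (x +ᵥ O) t
      simp only [AffineMap.lineMap_apply, vadd_vsub] at h
      simp only [f, h, map_smul, LinearMap.smul_apply, smul_eq_mul]
      ring
    -- `x + y` is the midpoint of `2x` and `2y`.
    have hadd : ∀ x y : V, f (x + y) = f x + f y := by
      intro x y
      have h := hl ((2 : ℝ) • x +ᵥ O) ((2 : ℝ) • y +ᵥ O) (1 / 2)
      have hxy : AffineMap.lineMap ((2 : ℝ) • x +ᵥ O) ((2 : ℝ) • y +ᵥ O) (1 / 2 : ℝ)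
          = (x + y) +ᵥ O := by
        rw [AffineMap.lineMap_apply, vadd_vsub_vadd_cancel_right, vadd_vadd]
        congr 1
        module
      rw [hxy, vadd_vsub_vadd_cancel_right] at h
      have hx := hsmul 2 x
      have hy := hsmul 2 y
      simp only [f, map_smul, map_sub, map_add, LinearMap.smul_apply, LinearMap.sub_apply,
        LinearMap.add_apply, smul_eq_mul] at h hx hy ⊢
      linear_combination h + hx / 2 + hy / 2
    let l : Module.Dual ℝ V := { toFun := f, map_add' := hadd, map_smul' := hsmul }
    refine ⟨(c / 2, δ O, l), ?_⟩
    ext P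
    change c / 2 * g (P -ᵥ O) (P -ᵥ O) + δ O +
      (δ ((P -ᵥ O) +ᵥ O) - δ O - c / 2 * g (P -ᵥ O) (P -ᵥ O)) = δ P
    rw [vsub_vadd]
    ring
  exact Submodule.finiteDimensional_of_le hle

lemma span_evW {V A : Type*} [AddCommGroup V] [Module ℝ V] [AddTorsor V A]
    [FiniteDimensional ℝ V] (g : LinearMap.BilinForm ℝ V) :
    Submodule.span ℝ (Set.range (evW g : A → Module.Dual ℝ (Wg g A))) = ⊤ := by
  have := finiteDimensional_Wg (A := A) g
  rw [← Subspace.dualCoannihilator_dualAnnihilator_eq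
    (W := Submodule.span ℝ (Set.range (evW g : A → Module.Dual ℝ (Wg g A)))),
    Submodule.dualAnnihilator_eq_top_iff, Submodule.eq_bot_iff]
  intro δ hδ
  rw [Submodule.mem_dualCoannihilator] at hδ
  ext P
  exact hδ (evW g P) (Submodule.subset_span ⟨P, rfl⟩)

lemma IsCayleyMenger.apply_evW {V A : Type*} [AddCommGroup V] [Module ℝ V] [AddTorsor V A]
    {g : LinearMap.BilinForm ℝ V} {C : LinearMap.BilinForm ℝ (Module.Dual ℝ (Wg g A))}
    (hC : IsCayleyMenger g A C) (P Q : A) :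
    C (evW g P) (evW g Q) = g (P -ᵥ Q) (P -ᵥ Q) / 2 := by
  obtain ⟨hsymm, hiso, hg⟩ := hC
  have hann : AnnihilatesOne g (evW g P - evW g Q) := fun _ => sub_self (1 : ℝ)
  have hrep : Represents g (evW g P - evW g Q) (P -ᵥ Q) := by
    intro f _
    rw [AffineMap.linearMap_vsub]
    rfl
  have h := hg _ _ _ _ hann hann hrep hrep
  simp only [map_sub, LinearMap.sub_apply, hiso, hsymm (evW g Q) (evW g P)] at h
  linarith

lemma comp_mem_Wg {V A VB B : Type*} [AddCommGroup V] [Module ℝ V] [AddTorsor V A]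
    [AddCommGroup VB] [Module ℝ VB] [AddTorsor VB B] (φ : B →ᵃ[ℝ] A)
    {g : LinearMap.BilinForm ℝ V} {gbar : LinearMap.BilinForm ℝ VB}
    (hgbar : ∀ x y : VB, gbar x y = g (φ.linear x) (φ.linear y))
    {δ : A → ℝ} (hδ : δ ∈ Wg g A) : δ ∘ ⇑φ ∈ Wg gbar B := by
  obtain ⟨hq, c, hc⟩ := hδ
  refine ⟨fun P Q α β h => ?_, c, fun P Q => ?_⟩
  · simp only [Function.comp_apply, AffineMap.apply_lineMap, AffineMap.map_midpoint]
    exact hq (φ P) (φ Q) α β h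
  · have h := hc (φ P) (φ Q)
    simpa only [Function.comp_apply, AffineMap.map_midpoint, LinearMap.smul_apply, hgbar,
      AffineMap.linearMap_vsub] using h

/-- Let `φ : B → A` be an affine map between finite-dimensional
real affine spaces, `g` a symmetric bilinear form on `V_A`, and `ḡ ≠ 0` its pullback
along `dφ`.  Then (a) precomposition with `φ` maps `W_g` into `W_{ḡ}`, defining a
linear map `T : W_g → W_{ḡ}`; and (b) for all functionals `v̄, w̄` on `W_{ḡ}`:
`CM_{ḡ}(v̄, w̄) = CM_g(v̄ ∘ T, w̄ ∘ T)`. -/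
theorem stmt19 {V A VB B : Type*} [AddCommGroup V] [Module ℝ V] [AddTorsor V A]
    [AddCommGroup VB] [Module ℝ VB] [AddTorsor VB B]
    [FiniteDimensional ℝ V] [FiniteDimensional ℝ VB]
    (φ : B →ᵃ[ℝ] A)
    (g : LinearMap.BilinForm ℝ V) (hgs : ∀ x y, g x y = g y x)
    (gbar : LinearMap.BilinForm ℝ VB)
    (hgbar : ∀ x y : VB, gbar x y = g (φ.linear x) (φ.linear y))
    (hgbar0 : gbar ≠ 0)
    (CA : LinearMap.BilinForm ℝ (Module.Dual ℝ (Wg g A)))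
    (hCA : IsCayleyMenger g A CA)
    (CB : LinearMap.BilinForm ℝ (Module.Dual ℝ (Wg gbar B)))
    (hCB : IsCayleyMenger gbar B CB) :
    (∀ δ : A → ℝ, δ ∈ Wg g A → (δ ∘ ⇑φ) ∈ Wg gbar B) ∧
    (∀ T : Wg g A →ₗ[ℝ] Wg gbar B,
        (∀ δ : Wg g A, ((T δ : B → ℝ)) = (δ : A → ℝ) ∘ ⇑φ) →
        ∀ vb wb : Module.Dual ℝ (Wg gbar B),
          CB vb wb = CA (vb.comp T) (wb.comp T)) := by
  refine ⟨fun δ hδ => comp_mem_Wg φ hgbar hδ, fun T hT => ?_⟩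
  have hev : ∀ P : B, (evW gbar P).comp T = evW g (φ P) := by
    intro P
    ext δ
    exact congrFun (hT δ) P
  let T' : Module.Dual ℝ (Wg gbar B) →ₗ[ℝ] Module.Dual ℝ (Wg g A) := Module.Dual.transpose T
  have key : CB = CA.compl₁₂ T' T' := by
    refine LinearMap.ext_on_range (span_evW gbar) fun P => ?_
    refine LinearMap.ext_on_range (span_evW gbar) fun Q => ?_
    change _ = CA ((evW gbar P).comp T) ((evW gbar Q).comp T)
    rw [hev, hev, hCA.apply_evW, hCB.apply_evW, hgbar, AffineMap.linearMap_vsub]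
  intro vb wb
  rw [key]
  rfl
end
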